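/- arXiv:1005.4596 — 2 statements merged into one kernel-verified Lean document; each statement's English description precedes it below -/
import Mathlib

section
/- Let n ≥ 2 be an integer such that g_n(X) = X^n + X − 1 is irreducible over ℚ and let θ_n ∈ ℂ be a root of g_n. Then the discriminant of θ_n, i.e. the discriminant of the ℚ-basis (1, θ_n, …, θ_n^{n−1}) of K_n = ℚ(θ_n), equals (−1)^{(n−1)(n−2)/2} · (n^n + (n−1)^{n−1}). -/
open Polynomial IntermediateField

/-- The norm of `t - θ`, for `θ` the generator of a power basis, is the value at `t` of the
minimal polynomial of `θ`. -/
theorem PowerBasis.norm_algebraMap_sub_gen {R S : Type*} [CommRing R] [CommRing S] [Algebra R S]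
    (pb : PowerBasis R S) (t : R) :
    Algebra.norm R (algebraMap R S t - pb.gen) = (minpoly R pb.gen).eval t := by
  rw [← charpoly_leftMulMatrix, Matrix.eval_charpoly, Algebra.norm_eq_matrix_det pb.basis, map_sub,
    AlgHom.commutes]
  rfl

/-- The discriminant of a power basis whose generator has minimal polynomial
`Xⁿ + X - 1`. -/
theorem PowerBasis.discr_of_minpoly_eq {F L : Type*} [Field F] [Field L] [Algebra F L]
    [CharZero F] (pb : PowerBasis F L) (hdim : 2 ≤ pb.dim)
    (hmin : minpoly F pb.gen = X ^ pb.dim + X - 1) :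
    Algebra.discr F pb.basis =
      (-1) ^ ((pb.dim - 1) * (pb.dim - 2) / 2) *
        ((pb.dim ^ pb.dim + (pb.dim - 1) ^ (pb.dim - 1) : ℕ) : F) := by
  have := pb.finite
  have hrank := pb.finrank
  have hroot : pb.gen ^ pb.dim + pb.gen - 1 = 0 := by
    simpa [hmin] using minpoly.aeval F pb.gen
  have hnorm_sub := pb.norm_algebraMap_sub_gen
  rw [Algebra.discr_powerBasis_eq_norm]
  rw [hmin] at hnorm_sub ⊢
  generalize pb.gen = θ at hroot hnorm_sub ⊢
  rw [hrank]
  obtain ⟨m, hm⟩ := Nat.exists_eq_add_of_le' hdim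
  simp only [hm] at hrank hroot hnorm_sub ⊢
  have hnorm_smul (c : F) (x : L) :
      Algebra.norm F (algebraMap F L c * x) = c ^ (m + 2) * Algebra.norm F x := by
    rw [map_mul, Algebra.norm_algebraMap, hrank]
  have hm1 : (m + 1 : F) ≠ 0 := by exact_mod_cast m.succ_ne_zero
  have hnorm_gen : Algebra.norm F θ = (-1) ^ (m + 1) := by
    have h := hnorm_smul (-1) (algebraMap F L 0 - θ)
    rw [hnorm_sub] at h
    simpa [pow_succ] using h
  have hderiv : θ * aeval θ (derivative (X ^ (m + 2) + X - 1 : F[X])) =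
      algebraMap F L (m + 1) * (algebraMap F L ((m + 2) / (m + 1)) - θ) := by
    rw [mul_sub, ← map_mul, mul_div_cancel₀ _ hm1]
    simp [map_ofNat]
    linear_combination (m + 2 : L) * hroot
  have hnorm_deriv := congrArg (Algebra.norm F) hderiv
  rw [map_mul, hnorm_smul, hnorm_sub, hnorm_gen] at hnorm_deriv
  have hvalue : (m + 1 : F) ^ (m + 2) *
      (X ^ (m + 2) + X - 1 : F[X]).eval ((m + 2) / (m + 1) : F) =
        (m + 2) ^ (m + 2) + (m + 1) ^ (m + 1) := by
    simp only [eval_sub, eval_add, eval_pow, eval_X, eval_one, div_pow]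
    field_simp
    ring
  rw [hvalue] at hnorm_deriv
  have hexp : (m + 2) * (m + 2 - 1) / 2 = (m + 2 - 1) * (m + 2 - 2) / 2 + (m + 1) := by
    have : (m + 2) * (m + 2 - 1) = (m + 2 - 1) * (m + 2 - 2) + 2 * (m + 1) := by
      simp only [Nat.add_sub_cancel, Nat.reduceSubDiff]
      ring
    omega
  rw [hexp, pow_add, mul_assoc, hnorm_deriv]
  simp

/-- For `n ≥ 2` with `gₙ = Xⁿ + X - 1` irreducible over `ℚ` and `θ` a root of `gₙ`
generating the number field `Kₙ = ℚ(θ)`, the discriminant of the `ℚ`-basis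
`(1, θ, …, θ^{n-1})` of `Kₙ` equals `(-1)^{(n-1)(n-2)/2} · (nⁿ + (n-1)^{n-1})`. -/
theorem stmt1 (n : ℕ) (hn : 2 ≤ n)
    (hirr : Irreducible ((X : ℚ[X]) ^ n + X - 1))
    (K : Type*) [Field K] [NumberField K]
    (θ : K) (hθ : Polynomial.aeval θ ((X : ℚ[X]) ^ n + X - 1) = 0)
    (hgen : IntermediateField.adjoin ℚ {θ} = ⊤) :
    Algebra.discr ℚ (fun i : Fin n => θ ^ (i : ℕ))
      = (-1 : ℚ) ^ ((n - 1) * (n - 2) / 2) * ((n ^ n + (n - 1) ^ (n - 1) : ℕ) : ℚ) := by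
  have hdeg : (X - 1 : ℚ[X]).degree < n := by
    rw [← C_1, degree_X_sub_C]
    exact_mod_cast hn
  have hpoly : (X ^ n + X - 1 : ℚ[X]) = X ^ n + (X - 1) := add_sub_assoc _ _ _
  have hmin : minpoly ℚ θ = X ^ n + X - 1 :=
    (minpoly.eq_of_irreducible_of_monic hirr hθ (hpoly ▸ monic_X_pow_add hdeg)).symm
  have hint : IsIntegral ℚ θ := .of_finite ℚ θ
  have htop : Algebra.adjoin ℚ {θ} = ⊤ := by
    rw [← adjoin_simple_toSubalgebra_of_isAlgebraic hint.isAlgebraic, hgen, top_toSubalgebra]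
  obtain ⟨pb, rfl⟩ : ∃ pb : PowerBasis ℚ K, pb.gen = θ :=
    ⟨.ofAdjoinEqTop hint htop, PowerBasis.ofAdjoinEqTop_gen hint htop⟩
  obtain rfl : pb.dim = n := by
    rw [← pb.natDegree_minpoly, hmin, hpoly]
    exact natDegree_eq_of_degree_eq_some (by rw [degree_add_eq_left_of_degree_lt] <;> simp [hdeg])
  rw [← pb.coe_basis]
  exact pb.discr_of_minpoly_eq hn hmin
end

section
/- Let n ≥ 2 be an integer such that g_n(X) = X^n + X − 1 is irreducible over ℚ, let θ_n ∈ ℂ be a root of g_n, let K_n = ℚ(θ_n) with ring of integers ℤ_{K_n}, and let r be a nonzero integer. If p is a rational prime dividing r but not dividing n^n + (n−1)^{n−1}, then the index of the order ℤ[rθ_n] in ℤ_{K_n} (the index of the additive subgroup generated by the ℤ-algebra ℤ[rθ_n] inside ℤ_{K_n}) has p-adic valuation equal to (n(n−1)/2) · v_p(r), where v_p(r) is the p-adic valuation of r. In particular, for r = m^k with m squarefree and p | m, this local index equals k·n(n−1)/2. -/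
open Polynomial IntermediateField NumberField

/-- The powers of `x` form a `ℤ`-basis of `ℤ[x]`, so the index of `ℤ[x]` in the ring of integers is
the absolute value of their determinant in any integral basis. -/
theorem index_adjoin_eq_natAbs_det {K : Type*} [Field K] [NumberField K] (x : 𝓞 K) {n : ℕ}
    (hdeg : (minpoly ℤ x).natDegree = n) (b : Module.Basis (Fin n) ℤ (𝓞 K)) :
    (Algebra.adjoin ℤ ({x} : Set (𝓞 K))).toSubring.toAddSubgroup.index =
      (b.det fun i : Fin n => x ^ (i : ℕ)).natAbs := by
  subst hdeg
  have hx : IsIntegral ℤ x := RingOfIntegers.isIntegral x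
  let B := Algebra.adjoin.powerBasis' hx
  have hdim : B.dim = (minpoly ℤ x).natDegree := Algebra.adjoin.powerBasis'_dim hx
  have key := AddSubgroup.index_eq_natAbs_det b
    (Algebra.adjoin ℤ ({x} : Set (𝓞 K))).toSubring.toAddSubgroup
    (B.basis.reindex (finCongr hdim))
  rw [key]
  congr 2
  funext i
  have hgen : ((B.gen : Algebra.adjoin ℤ ({x} : Set (𝓞 K))) : 𝓞 K) = x := by
    simp [B, Algebra.adjoin.powerBasis'_gen]
  have : (B.basis.reindex (finCongr hdim)) i = B.gen ^ (i : ℕ) := by simp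
  calc ((B.basis.reindex (finCongr hdim) i : Algebra.adjoin ℤ ({x} : Set (𝓞 K))) : 𝓞 K)
      = (B.gen : 𝓞 K) ^ (i : ℕ) := by rw [this, SubmonoidClass.coe_pow]
    _ = x ^ (i : ℕ) := by rw [hgen]

/-- The minimal polynomial over `ℤ` of an integral primitive element has degree `[K : ℚ]`. -/
theorem natDegree_minpoly_int_eq_finrank {K : Type*} [Field K] [NumberField K] (x : 𝓞 K)
    (hx : ℚ⟮(x : K)⟯ = ⊤) : (minpoly ℤ x).natDegree = Module.finrank ℚ K := by
  rw [← (Field.primitive_element_iff_minpoly_natDegree_eq ℚ (x : K)).mp hx,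
    minpoly.isIntegrallyClosed_eq_field_fractions ℚ K (RingOfIntegers.isIntegral x),
    (minpoly.monic (RingOfIntegers.isIntegral x)).natDegree_map]

/-- Scaling an integral primitive element by `r` multiplies the index of the order it generates by
`|r| ^ (n(n-1)/2)`, where `n` is the degree of the field. -/
theorem index_adjoin_mul {K : Type*} [Field K] [NumberField K] (t : 𝓞 K)
    (ht : ℚ⟮(t : K)⟯ = ⊤) {r : ℤ} (hr : r ≠ 0) {n : ℕ} (hn : Module.finrank ℚ K = n) :
    (Algebra.adjoin ℤ ({(r : 𝓞 K) * t} : Set (𝓞 K))).toSubring.toAddSubgroup.index =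
      r.natAbs ^ (n * (n - 1) / 2) *
        (Algebra.adjoin ℤ ({t} : Set (𝓞 K))).toSubring.toAddSubgroup.index := by
  have hrt : ℚ⟮(((r : 𝓞 K) * t : 𝓞 K) : K)⟯ = ⊤ := by
    rw [eq_top_iff, ← ht, adjoin_simple_le_iff]
    have h : (t : K) = algebraMap ℚ K ((r : ℚ)⁻¹) * (((r : 𝓞 K) * t : 𝓞 K) : K) := by
      have : (r : K) ≠ 0 := by exact_mod_cast hr
      simp [this]
    rw [h]
    exact mul_mem (IntermediateField.algebraMap_mem _ _) (mem_adjoin_simple_self ℚ _)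
  let b : Module.Basis (Fin n) ℤ (𝓞 K) :=
    Module.finBasisOfFinrankEq ℤ (𝓞 K) ((RingOfIntegers.rank K).trans hn)
  rw [index_adjoin_eq_natAbs_det _ ((natDegree_minpoly_int_eq_finrank _ hrt).trans hn) b,
    index_adjoin_eq_natAbs_det _ ((natDegree_minpoly_int_eq_finrank _ ht).trans hn) b]
  have h : (fun i : Fin n => ((r : 𝓞 K) * t) ^ (i : ℕ)) =
      fun i : Fin n => (r ^ (i : ℕ)) • (t ^ (i : ℕ)) := by
    ext i
    simp [mul_pow, zsmul_eq_mul]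
  rw [h, AlternatingMap.map_smul_univ, smul_eq_mul, Int.natAbs_mul,
    Fin.prod_univ_eq_prod_range (fun i => r ^ i) n, Finset.prod_pow_eq_pow_sum,
    Finset.sum_range_id, Int.natAbs_pow]

/-- If the integer `D` is a multiple of `f'(t)`, where `t` is an integral primitive element
with minimal polynomial `f`, then `D` annihilates `𝓞 K / ℤ[t]`; hence any prime dividing the
(finite) index of `ℤ[t]` divides `D`. -/
theorem index_adjoin_ne_zero_and_prime_dvd {K : Type*} [Field K] [NumberField K] (t : 𝓞 K)
    (ht : ℚ⟮(t : K)⟯ = ⊤) {D : ℕ} (hD : D ≠ 0)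
    (hdvd : aeval t (derivative (minpoly ℤ t)) ∣ (D : 𝓞 K)) :
    (Algebra.adjoin ℤ ({t} : Set (𝓞 K))).toSubring.toAddSubgroup.index ≠ 0 ∧
      ∀ p : ℕ, p.Prime →
        p ∣ (Algebra.adjoin ℤ ({t} : Set (𝓞 K))).toSubring.toAddSubgroup.index → p ∣ D := by
  have htop : Algebra.adjoin ℚ {algebraMap (𝓞 K) K t} = ⊤ := by
    rw [← IntermediateField.adjoin_simple_toSubalgebra_of_isAlgebraic
      (Algebra.IsAlgebraic.isAlgebraic _)]
    exact (congrArg IntermediateField.toSubalgebra ht).trans IntermediateField.top_toSubalgebra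
  have hcond : (D : 𝓞 K) ∈ conductor ℤ t := by
    have hle : Ideal.span {aeval t (derivative (minpoly ℤ t))} ≤ conductor ℤ t := by
      rw [← conductor_mul_differentIdeal ℤ ℚ K t htop]
      exact Ideal.mul_le_left
    exact hle (Ideal.mem_span_singleton.mpr hdvd)
  set N := (Algebra.adjoin ℤ ({t} : Set (𝓞 K))).toSubring.toAddSubgroup
  have hkill : ∀ q : 𝓞 K ⧸ N, D • q = 0 := by
    intro q
    induction q using QuotientAddGroup.induction_on with
    | H z =>
      rw [← QuotientAddGroup.mk_nsmul, QuotientAddGroup.eq_zero_iff, nsmul_eq_mul]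
      exact mem_conductor_iff.mp hcond z
  have hfin : Finite (𝓞 K ⧸ N) := by
    have : Module.Finite ℤ (𝓞 K ⧸ N) :=
      Module.Finite.of_surjective (QuotientAddGroup.mk' N).toIntLinearMap
        (QuotientAddGroup.mk'_surjective N)
    refine Module.finite_of_fg_torsion _ fun q => ?_
    exact ⟨⟨(D : ℤ), mem_nonZeroDivisors_of_ne_zero (by exact_mod_cast hD)⟩, by
      simpa [Submonoid.smul_def] using hkill q⟩
  refine ⟨AddSubgroup.index_ne_zero_of_finite, fun p hp hpN => ?_⟩
  have : Fact p.Prime := ⟨hp⟩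
  obtain ⟨q, hq⟩ := exists_prime_addOrderOf_dvd_card' (G := 𝓞 K ⧸ N) p hpN
  exact hq ▸ addOrderOf_dvd_of_nsmul_eq_zero (hkill q)

/-- In any commutative ring, the derivative of `X ^ n + X - 1` at a root divides
`n ^ n + (n - 1) ^ (n - 1)`. -/
theorem derivative_dvd_of_pow_add_sub_one {R : Type*} [CommRing R] (t : R) (m : ℕ)
    (ht : t ^ (m + 1) + t - 1 = 0) :
    ((m + 1 : ℕ) : R) * t ^ m + 1 ∣ (((m + 1) ^ (m + 1) + m ^ m : ℕ) : R) := by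
  obtain ⟨u, hu⟩ := sub_dvd_pow_sub_pow ((m : R) + 1) (m * t) (m + 1)
  refine ⟨t * (u + (m : R) ^ m), ?_⟩
  have h : (((m + 1 : ℕ) : R) * t ^ m + 1) * t = (m : R) + 1 - m * t := by
    push_cast
    linear_combination ((m : R) + 1) * ht
  rw [← mul_assoc, h, mul_add, ← hu, mul_pow]
  push_cast
  linear_combination ((m : R) ^ (m + 1)) * ht

/-- For `n ≥ 2` with `gₙ = Xⁿ + X - 1` irreducible over `ℚ`, `θ` a root of `gₙ`
generating the number field `Kₙ = ℚ(θ)`, and `r` a nonzero integer: if a rational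
prime `p` divides `r` but not `nⁿ + (n-1)^{n-1}`, then the index of the order
`ℤ[rθ]` in `𝓞 Kₙ` has `p`-adic valuation `(n(n-1)/2) · v_p(r)`.  In particular,
for `r = mᵏ` with `m` squarefree and `p ∣ m`, this local index is `k·n(n-1)/2`. -/
theorem stmt5 (n : ℕ) (hn : 2 ≤ n)
    (hirr : Irreducible ((X : ℚ[X]) ^ n + X - 1))
    (K : Type*) [Field K] [NumberField K]
    (θ : K) (hθ : Polynomial.aeval θ ((X : ℚ[X]) ^ n + X - 1) = 0)
    (hgen : IntermediateField.adjoin ℚ {θ} = ⊤)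
    (r : ℤ) (hr : r ≠ 0)
    (p : ℕ) (hp : p.Prime) (hpr : (p : ℤ) ∣ r)
    (hpd : ¬ (p ∣ n ^ n + (n - 1) ^ (n - 1)))
    (x : 𝓞 K) (hx : algebraMap (𝓞 K) K x = (r : K) * θ) :
    padicValNat p
        ((Algebra.adjoin ℤ ({x} : Set (𝓞 K))).toSubring.toAddSubgroup.index)
      = (n * (n - 1) / 2) * padicValInt p r
    ∧ (∀ (m : ℤ) (k : ℕ), Squarefree m → (p : ℤ) ∣ m → r = m ^ k →
        padicValNat p
            ((Algebra.adjoin ℤ ({x} : Set (𝓞 K))).toSubring.toAddSubgroup.index)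
          = k * (n * (n - 1)) / 2) := by
  obtain ⟨m, rfl⟩ : ∃ m, n = m + 1 := ⟨n - 1, by omega⟩
  have : Fact p.Prime := ⟨hp⟩
  have hθ' : θ ^ (m + 1) + θ - 1 = 0 := by simpa using hθ
  have hmonic : ((X : ℤ[X]) ^ (m + 1) + X - 1).Monic := by
    rw [add_sub_assoc]
    refine monic_X_pow_add ?_
    rw [← C_1, degree_X_sub_C]
    exact_mod_cast hn
  have hmap : ((X : ℤ[X]) ^ (m + 1) + X - 1).map (algebraMap ℤ ℚ) = X ^ (m + 1) + X - 1 := by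
    simp
  have hdegQ : ((X : ℚ[X]) ^ (m + 1) + X - 1).natDegree = m + 1 := by
    rw [← hmap, hmonic.natDegree_map]
    compute_degree!
    all_goals omega
  have hminQ : minpoly ℚ θ = X ^ (m + 1) + X - 1 :=
    (minpoly.eq_of_irreducible_of_monic hirr hθ (hmap ▸ hmonic.map _)).symm
  have hint : IsIntegral ℤ θ := ⟨_, hmonic, by simpa using hθ'⟩
  obtain ⟨t, rfl⟩ : ∃ t : 𝓞 K, (t : K) = θ := ⟨⟨θ, hint⟩, rfl⟩
  have hminZ : minpoly ℤ t = X ^ (m + 1) + X - 1 := by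
    apply map_injective (algebraMap ℤ ℚ) Int.cast_injective
    rw [← minpoly.isIntegrallyClosed_eq_field_fractions ℚ K (RingOfIntegers.isIntegral t), hmap]
    exact hminQ
  have hfinrank : Module.finrank ℚ K = m + 1 := by
    rw [← (Field.primitive_element_iff_minpoly_natDegree_eq ℚ (t : K)).mp hgen, hminQ, hdegQ]
  have ht : t ^ (m + 1) + t - 1 = 0 := by
    apply RingOfIntegers.coe_injective
    simpa using hθ'
  obtain rfl : x = (r : 𝓞 K) * t := by
    apply RingOfIntegers.coe_injective
    simpa using hx
  obtain ⟨hne, hdvd⟩ := index_adjoin_ne_zero_and_prime_dvd t hgen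
    (D := (m + 1) ^ (m + 1) + m ^ m) (by positivity) (by
      rw [hminZ]
      simpa using derivative_dvd_of_pow_add_sub_one t m ht)
  have main : padicValNat p ((Algebra.adjoin ℤ
      ({(r : 𝓞 K) * t} : Set (𝓞 K))).toSubring.toAddSubgroup.index) =
      ((m + 1) * (m + 1 - 1) / 2) * padicValInt p r := by
    rw [index_adjoin_mul t hgen hr hfinrank,
      padicValNat.mul (pow_ne_zero _ (Int.natAbs_ne_zero.mpr hr)) hne, padicValNat.pow,
      padicValNat.eq_zero_of_not_dvd fun h => hpd (hdvd p hp h), padicValInt, add_zero]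
  refine ⟨main, fun s k hs hps hrs => ?_⟩
  have hval : padicValInt p s = 1 := by
    refine le_antisymm ?_ ?_
    · by_contra! h
      have h2 : ((p : ℤ)) ^ 2 ∣ s :=
        (padicValInt_dvd_iff 2 s).mpr (Or.inr h)
      rw [sq] at h2
      exact (Nat.prime_iff_prime_int.mp hp).not_isUnit (hs _ h2)
    · exact ((padicValInt_dvd_iff 1 s).mp (by simpa using hps)).resolve_left hs.ne_zero
  have hvalr : padicValInt p r = k := by
    rw [hrs, padicValInt, Int.natAbs_pow, padicValNat.pow]
    exact (congrArg (k * ·) hval).trans (mul_one k)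
  rw [main, hvalr, mul_comm, Nat.mul_div_assoc k (Nat.even_mul_pred_self (m + 1)).two_dvd]
end
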